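/- arXiv:1201.6093 — 7 statements merged into one kernel-verified Lean document; each statement's English description precedes it below -/
import Mathlib

section
/- Let N be the lattice ⟨2⟩ ⊕ U(2) ⊕ E8(2) and N' the lattice ⟨4⟩ ⊕ U ⊕ E8, both of rank 11 and signature (2,9). Then there is a bijection between the orbit spaces D(N)/O(N) and D(N')/O(N') of the period domains modulo the full integral orthogonal groups. -/
open Matrix

/-- The hyperbolic plane `U`, with Gram matrix `[[0,1],[1,0]]`. -/
abbrev latU : Matrix (Fin 2) (Fin 2) ℤ := !![0, 1; 1, 0]

/-- The negative definite even unimodular lattice `E₈` (negative of the Cartan matrix). -/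
abbrev latE8 : Matrix (Fin 8) (Fin 8) ℤ :=
  !![-2,  0,  1,  0,  0,  0,  0,  0;
      0, -2,  0,  1,  0,  0,  0,  0;
      1,  0, -2,  1,  0,  0,  0,  0;
      0,  1,  1, -2,  1,  0,  0,  0;
      0,  0,  0,  1, -2,  1,  0,  0;
      0,  0,  0,  0,  1, -2,  1,  0;
      0,  0,  0,  0,  0,  1, -2,  1;
      0,  0,  0,  0,  0,  0,  1, -2]

/-- Orthogonal direct sum of two lattices (block-diagonal Gram matrix). -/
def dsum {a b : ℕ} (A : Matrix (Fin a) (Fin a) ℤ) (B : Matrix (Fin b) (Fin b) ℤ) :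
    Matrix (Fin (a + b)) (Fin (a + b)) ℤ :=
  Matrix.reindex finSumFinEquiv finSumFinEquiv (Matrix.fromBlocks A 0 0 B)

/-- `N = ⟨2⟩ ⊕ U(2) ⊕ E8(2)`. -/
def gramN : Matrix (Fin 11) (Fin 11) ℤ := dsum (dsum !![(2 : ℤ)] (2 • latU)) (2 • latE8)

/-- `N' = ⟨4⟩ ⊕ U ⊕ E8`. -/
def gramN' : Matrix (Fin 11) (Fin 11) ℤ := dsum (dsum !![(4 : ℤ)] latU) latE8

/-- The complex bilinear form attached to an integral Gram matrix `G`. -/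
noncomputable def cform {n : ℕ} (G : Matrix (Fin n) (Fin n) ℤ) (x y : Fin n → ℂ) : ℂ :=
  x ⬝ᵥ (G.map (Int.cast : ℤ → ℂ)).mulVec y

/-- `ω` represents a point of the period domain `D(N)`:
`ω ≠ 0`, `ωᵀGω = 0` and `ωᵀGω̄` is a positive real number. -/
def IsPeriodPt {n : ℕ} (G : Matrix (Fin n) (Fin n) ℤ) (ω : Fin n → ℂ) : Prop :=
  ω ≠ 0 ∧ cform G ω ω = 0 ∧ ∃ r : ℝ, 0 < r ∧ cform G ω (star ω) = (r : ℂ)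

/-- Two period points are related iff they define the same point of the projectivization
up to the action of an integral isometry `P ∈ O(G)`. -/
def periodRel {n : ℕ} (G : Matrix (Fin n) (Fin n) ℤ)
    (ω₁ ω₂ : {ω : Fin n → ℂ // IsPeriodPt G ω}) : Prop :=
  ∃ (c : ℂ) (P : Matrix (Fin n) (Fin n) ℤ), c ≠ 0 ∧ IsUnit P.det ∧ Pᵀ * G * P = G ∧
    (ω₂ : Fin n → ℂ) = c • (P.map (Int.cast : ℤ → ℂ)).mulVec (ω₁ : Fin n → ℂ)

/-- The orbit space `D(N)/O(N)` of the period domain modulo the integral orthogonal group. -/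
def OrbitSpace {n : ℕ} (G : Matrix (Fin n) (Fin n) ℤ) : Type :=
  Quot (periodRel G)

def invE8 : Matrix (Fin 8) (Fin 8) ℤ :=
  !![-4, -5, -7, -10, -8, -6, -4, -2;
     -5, -8, -10, -15, -12, -9, -6, -3;
     -7, -10, -14, -20, -16, -12, -8, -4;
     -10, -15, -20, -30, -24, -18, -12, -6;
     -8, -12, -16, -24, -20, -15, -10, -5;
     -6, -9, -12, -18, -15, -12, -8, -4;
     -4, -6, -8, -12, -10, -8, -6, -3;
     -2, -3, -4, -6, -5, -4, -3, -2]

def matH : Matrix (Fin 11) (Fin 11) ℤ := dsum (dsum !![(1 : ℤ)] latU) invE8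

def tv : Fin 11 → ℤ := fun i => if i = 0 then 2 else 1
def sv : Fin 11 → ℤ := fun i => if i = 0 then 1 else 2
def matT : Matrix (Fin 11) (Fin 11) ℤ := Matrix.diagonal tv
def matS : Matrix (Fin 11) (Fin 11) ℤ := Matrix.diagonal sv

set_option maxRecDepth 100000 in
lemma T_gram : matTᵀ * gramN * matT = (2 : ℤ) • gramN' := by
  decide +kernel

set_option maxRecDepth 100000 in
lemma H_gram : matH * gramN' = Matrix.diagonal (fun i => if i = 0 then 4 else 1) := by
  decide +kernel

lemma T_mul_S : matT * matS = (2 : ℤ) • 1 := by decide +kernel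
lemma S_mul_T : matS * matT = (2 : ℤ) • 1 := by decide +kernel

lemma T_left_cancel {A B : Matrix (Fin 11) (Fin 11) ℤ} (h : matT * A = matT * B) : A = B := by
  have := congrArg (matS * ·) h
  simp only [← Matrix.mul_assoc, S_mul_T, Matrix.smul_mul, Matrix.one_mul] at this
  exact smul_right_injective _ (by norm_num) this

lemma T_right_cancel {A B : Matrix (Fin 11) (Fin 11) ℤ} (h : A * matT = B * matT) : A = B := by
  have := congrArg (· * matS) h
  simp only [Matrix.mul_assoc, T_mul_S, Matrix.mul_smul, Matrix.mul_one] at this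
  exact smul_right_injective _ (by norm_num) this

lemma T_transpose : matTᵀ = matT := by simp [matT]

lemma det_T : matT.det = 2 := by
  simp [matT, tv, Matrix.det_diagonal]

lemma det_eq {P Q : Matrix (Fin 11) (Fin 11) ℤ} (h : Q * matT = matT * P) : Q.det = P.det := by
  have := congrArg Matrix.det h
  rw [Matrix.det_mul, Matrix.det_mul, det_T] at this
  linarith

lemma isom_iff {P Q : Matrix (Fin 11) (Fin 11) ℤ} (h : Q * matT = matT * P) :
    Qᵀ * gramN * Q = gramN ↔ Pᵀ * gramN' * P = gramN' := by
  have h2 : matTᵀ * Qᵀ = Pᵀ * matTᵀ := by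
    rw [← Matrix.transpose_mul, h, Matrix.transpose_mul]
  have key : matTᵀ * (Qᵀ * gramN * Q) * matT = (2 : ℤ) • (Pᵀ * gramN' * P) := by
    calc matTᵀ * (Qᵀ * gramN * Q) * matT = (matTᵀ * Qᵀ) * gramN * (Q * matT) := by
          simp only [Matrix.mul_assoc]
      _ = Pᵀ * (matTᵀ * gramN * matT) * P := by
          rw [h, h2]; simp only [Matrix.mul_assoc]
      _ = _ := by rw [T_gram, Matrix.mul_smul, Matrix.smul_mul]
  constructor
  · intro hQ
    rw [hQ, T_gram] at key
    exact (smul_right_injective _ (by norm_num) key).symm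
  · intro hP
    rw [hP, ← T_gram] at key
    have k2 := T_right_cancel key
    rw [T_transpose] at k2
    exact T_left_cancel k2

lemma quad (x : Fin 11 → ℤ) : ∃ k, x ⬝ᵥ gramN *ᵥ x = 2 * (x 0)^2 + 4 * k := by
  refine ⟨x 1 * x 2 + (-(x 3)^2 - (x 4)^2 - (x 5)^2 - (x 6)^2 - (x 7)^2 - (x 8)^2 - (x 9)^2 - (x 10)^2 + x 3 * x 5 + x 4 * x 6 + x 5 * x 6 + x 6 * x 7 + x 7 * x 8 + x 8 * x 9 + x 9 * x 10), ?_⟩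
  have hG : gramN = !![2, 0, 0, 0, 0, 0, 0, 0, 0, 0, 0;
    0, 0, 2, 0, 0, 0, 0, 0, 0, 0, 0;
    0, 2, 0, 0, 0, 0, 0, 0, 0, 0, 0;
    0, 0, 0, -4, 0, 2, 0, 0, 0, 0, 0;
    0, 0, 0, 0, -4, 0, 2, 0, 0, 0, 0;
    0, 0, 0, 2, 0, -4, 2, 0, 0, 0, 0;
    0, 0, 0, 0, 2, 2, -4, 2, 0, 0, 0;
    0, 0, 0, 0, 0, 0, 2, -4, 2, 0, 0;
    0, 0, 0, 0, 0, 0, 0, 2, -4, 2, 0;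
    0, 0, 0, 0, 0, 0, 0, 0, 2, -4, 2;
    0, 0, 0, 0, 0, 0, 0, 0, 0, 2, -4] := by decide +kernel
  rw [hG]
  simp [dotProduct, Matrix.mulVec, Fin.sum_univ_succ]
  ring

lemma diag_dvd : ∀ j : Fin 11, j ≠ 0 → gramN j j % 4 = 0 := by decide +kernel

lemma row_even {Q : Matrix (Fin 11) (Fin 11) ℤ} (h : Qᵀ * gramN * Q = gramN) (j : Fin 11)
    (hj : j ≠ 0) : 2 ∣ Q 0 j := by
  obtain ⟨k, hk⟩ := quad (fun i => Q i j)
  have h1 : (fun i => Q i j) ⬝ᵥ gramN *ᵥ (fun i => Q i j) = gramN j j := by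
    conv_rhs => rw [← h]
    rw [Matrix.mul_assoc]
    rfl
  have h2 := diag_dvd j hj
  rw [← h1, hk] at h2
  have h3 : 2 ∣ (Q 0 j)^2 := by
    beta_reduce at h2
    omega
  exact Int.prime_two.dvd_of_dvd_pow h3

lemma col_even {P : Matrix (Fin 11) (Fin 11) ℤ} (hu : IsUnit P.det)
    (h : Pᵀ * gramN' * P = gramN') (i : Fin 11) (hi : i ≠ 0) : 2 ∣ P i 0 := by
  have h1 : gramN' * P = (P⁻¹)ᵀ * gramN' := by
    conv_rhs => rw [← h]
    rw [Matrix.mul_assoc, ← Matrix.mul_assoc, ← Matrix.transpose_mul, Matrix.mul_nonsing_inv _ hu]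
    simp
  have h2 : P i 0 = (matH * (P⁻¹)ᵀ * gramN') i 0 := by
    rw [Matrix.mul_assoc, ← h1, ← Matrix.mul_assoc, H_gram, Matrix.diagonal_mul]
    simp [hi]
  rw [h2, Matrix.mul_apply]
  refine Finset.dvd_sum fun j _ => Dvd.dvd.mul_left ?_ _
  revert j
  decide +kernel

lemma exists_Q {P : Matrix (Fin 11) (Fin 11) ℤ} (hu : IsUnit P.det)
    (h : Pᵀ * gramN' * P = gramN') : ∃ Q, Q * matT = matT * P := by
  refine ⟨Matrix.of fun i j => tv i * P i j / tv j, ?_⟩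
  ext i j
  rw [matT, Matrix.mul_diagonal, Matrix.diagonal_mul, Matrix.of_apply]
  apply Int.ediv_mul_cancel
  by_cases hj : j = 0
  · by_cases hi : i = 0
    · simp [tv, hi, hj]
    · subst hj
      simpa [tv, hi] using col_even hu h i hi
  · simp [tv, hj]

lemma exists_P {Q : Matrix (Fin 11) (Fin 11) ℤ}
    (h : Qᵀ * gramN * Q = gramN) : ∃ P, Q * matT = matT * P := by
  refine ⟨Matrix.of fun i j => Q i j * tv j / tv i, ?_⟩
  ext i j
  rw [matT, Matrix.mul_diagonal, Matrix.diagonal_mul, Matrix.of_apply]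
  symm
  apply Int.mul_ediv_cancel'
  by_cases hi : i = 0
  · by_cases hj : j = 0
    · simp [tv, hi, hj]
    · subst hi
      simpa [tv, hj] using row_even h j hj
  · simp [tv, hi]

noncomputable def cT : Matrix (Fin 11) (Fin 11) ℂ := matT.map (Int.cast : ℤ → ℂ)

lemma map_mul' (A B : Matrix (Fin 11) (Fin 11) ℤ) :
    (A * B).map (Int.cast : ℤ → ℂ) = A.map (Int.cast : ℤ → ℂ) * B.map (Int.cast : ℤ → ℂ) :=
  Matrix.map_mul (f := Int.castRingHom ℂ)

lemma cT_apply (x : Fin 11 → ℂ) (i : Fin 11) : (cT *ᵥ x) i = (tv i : ℂ) * x i := by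
  have : cT = Matrix.diagonal (fun i => (tv i : ℂ)) := by
    rw [cT, matT, Matrix.diagonal_map (by simp)]
  rw [this, Matrix.mulVec_diagonal]

lemma tv_ne (i : Fin 11) : (tv i : ℂ) ≠ 0 := by
  unfold tv; split_ifs <;> norm_num

noncomputable def eT : (Fin 11 → ℂ) ≃ (Fin 11 → ℂ) where
  toFun x := cT *ᵥ x
  invFun x := fun i => x i / (tv i : ℂ)
  left_inv x := by
    ext i
    simp only [cT_apply]
    field_simp [tv_ne i]
  right_inv x := by
    ext i
    simp only [cT_apply]
    field_simp [tv_ne i]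

lemma star_eT (x : Fin 11 → ℂ) : star (cT *ᵥ x) = cT *ᵥ (star x) := by
  ext i
  simp [cT_apply]

lemma cform_eT (x y : Fin 11 → ℂ) :
    cform gramN (cT *ᵥ x) (cT *ᵥ y) = 2 * cform gramN' x y := by
  have h := congrArg (fun M : Matrix (Fin 11) (Fin 11) ℤ => M.map (Int.cast : ℤ → ℂ)) T_gram
  simp only [map_mul'] at h
  have h2 : ((2 : ℤ) • gramN').map (Int.cast : ℤ → ℂ) = (2 : ℂ) • gramN'.map (Int.cast : ℤ → ℂ) := by
    ext i j
    rw [Matrix.map_apply, Matrix.smul_apply, Matrix.smul_apply, Matrix.map_apply]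
    push_cast [smul_eq_mul]
    rfl
  rw [h2] at h
  have h3 : matTᵀ.map (Int.cast : ℤ → ℂ) = cTᵀ := rfl
  rw [h3, show matT.map (Int.cast : ℤ → ℂ) = cT from rfl] at h
  unfold cform
  rw [← Matrix.vecMul_transpose, ← Matrix.dotProduct_mulVec, Matrix.mulVec_mulVec,
    Matrix.mulVec_mulVec, h, Matrix.smul_mulVec, dotProduct_smul, smul_eq_mul]

lemma period_iff (x : Fin 11 → ℂ) : IsPeriodPt gramN' x ↔ IsPeriodPt gramN (eT x) := by
  have h0 : eT x = 0 ↔ x = 0 := by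
    have : eT 0 = 0 := by simp [eT]
    rw [← this, eT.apply_eq_iff_eq, this]
  unfold IsPeriodPt
  rw [ne_eq, ne_eq, h0]
  simp only [eT, Equiv.coe_fn_mk, star_eT, cform_eT]
  refine and_congr Iff.rfl (and_congr (by simp) ?_)
  constructor
  · rintro ⟨r, hr, h⟩
    exact ⟨2 * r, by positivity, by rw [h]; push_cast; ring⟩
  · rintro ⟨r, hr, h⟩
    exact ⟨r / 2, by positivity, by push_cast; rw [← h]; ring⟩

lemma act_eq {P Q : Matrix (Fin 11) (Fin 11) ℤ} (h : Q * matT = matT * P) (c : ℂ)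
    (x : Fin 11 → ℂ) :
    c • (Q.map (Int.cast : ℤ → ℂ)).mulVec (eT x) =
      eT (c • (P.map (Int.cast : ℤ → ℂ)).mulVec x) := by
  have h' := congrArg (fun M : Matrix (Fin 11) (Fin 11) ℤ => M.map (Int.cast : ℤ → ℂ)) h
  simp only [map_mul'] at h'
  simp only [eT, Equiv.coe_fn_mk, Matrix.mulVec_smul, Matrix.mulVec_mulVec, cT, h']

/-- There is a bijection between `D(N)/O(N)` and `D(N')/O(N')` for
`N = ⟨2⟩ ⊕ U(2) ⊕ E8(2)` and `N' = ⟨4⟩ ⊕ U ⊕ E8`. -/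
theorem coble_orbitSpace_equiv : Nonempty (OrbitSpace gramN ≃ OrbitSpace gramN') := by
  refine ⟨(Quot.congr (eT.subtypeEquiv period_iff) ?_).symm⟩
  rintro ⟨x, hx⟩ ⟨y, hy⟩
  simp only [periodRel, Equiv.subtypeEquiv_apply]
  constructor
  · rintro ⟨c, P, hc, hu, hP, he⟩
    obtain ⟨Q, hQ⟩ := exists_Q hu hP
    exact ⟨c, Q, hc, by rwa [det_eq hQ], (isom_iff hQ).2 hP, by rw [act_eq hQ, he]⟩
  · rintro ⟨c, Q, hc, hu, hQ, he⟩
    obtain ⟨P, hP⟩ := exists_P hQ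
    refine ⟨c, P, hc, by rwa [← det_eq hP], (isom_iff hP).1 hQ, ?_⟩
    rw [act_eq hP] at he
    exact eT.injective he
end

section
/- Let T be the odd unimodular lattice ⟨1⟩ ⊕ U ⊕ E8 of rank 11. The set T₀ of vectors of T of even norm is a sublattice of index 2 in T, it is isometric to the lattice ⟨4⟩ ⊕ U ⊕ E8, and it is the unique index-2 sublattice of T on which the form is even (i.e., every subgroup of index 2 all of whose elements have even norm equals T₀). -/
open Matrix

/-- The bilinear form of the lattice with Gram matrix `G` : `x ⋅ y = xᵀ G y`. -/
def bform {n : ℕ} (G : Matrix (Fin n) (Fin n) ℤ) (x y : Fin n → ℤ) : ℤ :=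
  x ⬝ᵥ G.mulVec y

/-- `T = ⟨1⟩ ⊕ U ⊕ E8`, an odd unimodular lattice of rank 11. -/
def gramT : Matrix (Fin 11) (Fin 11) ℤ := dsum (dsum !![(1 : ℤ)] latU) latE8

/-- `⟨4⟩ ⊕ U ⊕ E8`. -/
def gramT0 : Matrix (Fin 11) (Fin 11) ℤ := dsum (dsum !![(4 : ℤ)] latU) latE8

lemma bform_expl (c : ℤ) (x y : Fin 11 → ℤ) :
    bform (dsum (dsum !![c] latU) latE8 : Matrix (Fin 11) (Fin 11) ℤ) x y =
      c * (x 0 * y 0) + (x 1 * y 2 + x 2 * y 1)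
      + (-2) * (x 3 * y 3 + x 4 * y 4 + x 5 * y 5 + x 6 * y 6 + x 7 * y 7 + x 8 * y 8
        + x 9 * y 9 + x 10 * y 10)
      + (x 3 * y 5 + x 5 * y 3) + (x 4 * y 6 + x 6 * y 4) + (x 5 * y 6 + x 6 * y 5)
      + (x 6 * y 7 + x 7 * y 6) + (x 7 * y 8 + x 8 * y 7) + (x 8 * y 9 + x 9 * y 8)
      + (x 9 * y 10 + x 10 * y 9) := by
  have h : (dsum (dsum !![c] latU) latE8 : Matrix (Fin 11) (Fin 11) ℤ) =
     !![c, 0, 0, 0, 0, 0, 0, 0, 0, 0, 0;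
        0, 0, 1, 0, 0, 0, 0, 0, 0, 0, 0;
        0, 1, 0, 0, 0, 0, 0, 0, 0, 0, 0;
        0, 0, 0, -2,  0,  1,  0,  0,  0,  0,  0;
        0, 0, 0, 0, -2,  0,  1,  0,  0,  0,  0;
        0, 0, 0, 1,  0, -2,  1,  0,  0,  0,  0;
        0, 0, 0, 0,  1,  1, -2,  1,  0,  0,  0;
        0, 0, 0, 0,  0,  0,  1, -2,  1,  0,  0;
        0, 0, 0, 0,  0,  0,  0,  1, -2,  1,  0;
        0, 0, 0, 0,  0,  0,  0,  0,  1, -2,  1;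
        0, 0, 0, 0,  0,  0,  0,  0,  0,  1, -2] := by
    ext i j
    fin_cases i <;> fin_cases j <;> rfl
  rw [h]
  simp only [bform, dotProduct, mulVec, Fin.sum_univ_succ, Matrix.of_apply, Fin.sum_univ_zero]
  simp [Fin.succ]
  ring

lemma even_bform (x : Fin 11 → ℤ) : Even (bform gramT x x) ↔ (2 : ℤ) ∣ x 0 := by
  rw [gramT, bform_expl]
  have h2 : (2 : ℤ) ∣ x 0 ↔ Even (x 0 * x 0) := by
    rw [Int.even_mul, or_self, even_iff_two_dvd]
  rw [h2, Int.even_iff, Int.even_iff]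
  rw [mul_comm (x 2) (x 1), mul_comm (x 5) (x 3), mul_comm (x 6) (x 4), mul_comm (x 6) (x 5),
    mul_comm (x 7) (x 6), mul_comm (x 8) (x 7), mul_comm (x 9) (x 8), mul_comm (x 10) (x 9)]
  omega

def latS : Submodule ℤ (Fin 11 → ℤ) where
  carrier := {x | (2 : ℤ) ∣ x 0}
  add_mem' := fun ha hb => dvd_add ha hb
  zero_mem' := dvd_zero _
  smul_mem' := fun c _ hx => Dvd.dvd.mul_left hx c

lemma mem_latS (x : Fin 11 → ℤ) : x ∈ latS ↔ (2 : ℤ) ∣ x 0 := Iff.rfl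

/-- Doubling the first coordinate. -/
def dbl : (Fin 11 → ℤ) →ₗ[ℤ] latS where
  toFun x := ⟨fun i => if i = 0 then 2 * x 0 else x i, by simp [mem_latS]⟩
  map_add' x y := by
    ext i
    by_cases h : i = 0 <;> simp [h, mul_add]
  map_smul' c x := by
    ext i
    by_cases h : i = 0 <;> simp [h, mul_left_comm]

lemma dbl_apply (x : Fin 11 → ℤ) (i : Fin 11) :
    (dbl x : Fin 11 → ℤ) i = if i = 0 then 2 * x 0 else x i := rfl

lemma dbl_bij : Function.Bijective dbl := by
  constructor
  · intro x y h
    ext i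
    have h1 : (dbl x : Fin 11 → ℤ) i = (dbl y : Fin 11 → ℤ) i := by rw [h]
    rw [dbl_apply, dbl_apply] at h1
    by_cases hi : i = 0
    · subst hi
      simpa using h1
    · simpa [hi] using h1
  · rintro ⟨x, k, hk⟩
    refine ⟨fun i => if i = 0 then k else x i, ?_⟩
    ext i
    rw [dbl_apply]
    by_cases hi : i = 0
    · subst hi
      simp [hk]
    · simp [hi]

lemma dbl_form (x y : Fin 11 → ℤ) : bform gramT (dbl x) (dbl y) = bform gramT0 x y := by
  rw [gramT, gramT0, bform_expl, bform_expl]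
  simp [dbl_apply]
  ring

lemma latS_index : latS.toAddSubgroup.index = 2 := by
  rw [AddSubgroup.index_eq_two_iff]
  refine ⟨Pi.single 0 1, fun b => ?_⟩
  simp only [Submodule.mem_toAddSubgroup, mem_latS, Pi.add_apply, Pi.single_eq_same, Xor]
  omega

/-- The set `T₀` of vectors of even norm in `T = ⟨1⟩ ⊕ U ⊕ E8` is a sublattice of index 2,
it is isometric to `⟨4⟩ ⊕ U ⊕ E8`, and it is the unique index-2 subgroup of `T` all of whose
elements have even norm. -/
theorem even_sublattice_odd_unimodular :
    ∃ S : Submodule ℤ (Fin 11 → ℤ),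
      (∀ x, x ∈ S ↔ Even (bform gramT x x)) ∧
      S.toAddSubgroup.index = 2 ∧
      (∃ e : S ≃ₗ[ℤ] (Fin 11 → ℤ),
        ∀ x y : S, bform gramT0 (e x) (e y) = bform gramT x y) ∧
      (∀ S' : AddSubgroup (Fin 11 → ℤ), S'.index = 2 →
        (∀ x ∈ S', Even (bform gramT x x)) → S' = S.toAddSubgroup) := by
  refine ⟨latS, fun x => (even_bform x).symm, latS_index,
    ⟨(LinearEquiv.ofBijective dbl dbl_bij).symm, fun x y => ?_⟩, fun S' hS' he => ?_⟩
  · rw [← dbl_form]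
    have h (z : latS) : dbl ((LinearEquiv.ofBijective dbl dbl_bij).symm z) = z :=
      (LinearEquiv.ofBijective dbl dbl_bij).apply_symm_apply z
    rw [h, h]
  · have hle : S' ≤ latS.toAddSubgroup := fun x hx => (even_bform x).1 (he x hx)
    obtain ⟨a, ha⟩ := AddSubgroup.index_eq_two_iff.1 hS'
    refine le_antisymm hle fun x hx => ?_
    by_contra hn
    have hxa : x + a ∈ S' := by
      rcases ha x with h | h
      · exact h.1
      · exact absurd h.1 hn
    have haS : a ∈ latS.toAddSubgroup := (AddSubgroup.add_mem_cancel_left _ hx).1 (hle hxa)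
    have htop : ∀ b, b ∈ latS.toAddSubgroup := fun b => by
      rcases ha b with h | h
      · exact (AddSubgroup.add_mem_cancel_right _ haS).1 (hle h.1)
      · exact hle h.1
    have := latS_index
    rw [(AddSubgroup.eq_top_iff' _).2 htop, AddSubgroup.index_top] at this
    omega
end

section
/- Let T be the odd unimodular lattice ⟨1⟩ ⊕ U ⊕ E8 of rank 11 and let T₀ be its even sublattice, consisting of all vectors of even norm. Then every isometry of T maps T₀ onto T₀, and the restriction map O(T) → O(T₀), f ↦ f|_{T₀}, is a group isomorphism; in particular every isometry of T₀ extends uniquely to an isometry of T. -/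
open Matrix

/-- An isometry of the lattice `(ℤ¹¹, G)`: a ℤ-module automorphism preserving the form. -/
def IsIsometry {n : ℕ} (G : Matrix (Fin n) (Fin n) ℤ)
    (f : (Fin n → ℤ) ≃ₗ[ℤ] (Fin n → ℤ)) : Prop :=
  ∀ x y, bform G (f x) (f y) = bform G x y

lemma gramT_eq : gramT = !![
  1,0,0, 0,0,0,0,0,0,0,0;
  0,0,1, 0,0,0,0,0,0,0,0;
  0,1,0, 0,0,0,0,0,0,0,0;
  0,0,0, -2,  0,  1,  0,  0,  0,  0,  0;
  0,0,0,    0, -2,  0,  1,  0,  0,  0,  0;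
  0,0,0,    1,  0, -2,  1,  0,  0,  0,  0;
  0,0,0,    0,  1,  1, -2,  1,  0,  0,  0;
  0,0,0,    0,  0,  0,  1, -2,  1,  0,  0;
  0,0,0,    0,  0,  0,  0,  1, -2,  1,  0;
  0,0,0,    0,  0,  0,  0,  0,  1, -2,  1;
  0,0,0,    0,  0,  0,  0,  0,  0,  1, -2] := by
  decide +kernel

lemma bform_eq (x y : Fin 11 → ℤ) : bform gramT x y =
    x 0 * y 0 + (x 2 * y 1 + x 1 * y 2)
    + (-2 * x 3 + x 5) * y 3 + (-2 * x 4 + x 6) * y 4 + (x 3 - 2 * x 5 + x 6) * y 5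
    + (x 4 + x 5 - 2 * x 6 + x 7) * y 6 + (x 6 - 2 * x 7 + x 8) * y 7
    + (x 7 - 2 * x 8 + x 9) * y 8 + (x 8 - 2 * x 9 + x 10) * y 9
    + (x 9 - 2 * x 10) * y 10 := by
  rw [gramT_eq]
  simp only [bform, dotProduct, Matrix.mulVec, Fin.sum_univ_succ, Fin.sum_univ_zero]
  simp
  ring_nf

lemma even_iff (x : Fin 11 → ℤ) : Even (bform gramT x x) ↔ Even (x 0) := by
  have : bform gramT x x = x 0 * x 0 + 2 * (x 1 * x 2 - x 3 ^ 2 - x 4 ^ 2 - x 5 ^ 2 - x 6 ^ 2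
      - x 7 ^ 2 - x 8 ^ 2 - x 9 ^ 2 - x 10 ^ 2 + x 3 * x 5 + x 4 * x 6 + x 5 * x 6 + x 6 * x 7
      + x 7 * x 8 + x 8 * x 9 + x 9 * x 10) := by
    rw [bform_eq]; ring
  rw [this]
  simp [Int.even_add, Int.even_mul]

lemma bform_smul (x y : Fin 11 → ℤ) :
    bform gramT ((2 : ℤ) • x) ((2 : ℤ) • y) = 4 * bform gramT x y := by
  simp only [bform_eq, Pi.smul_apply, smul_eq_mul]; ring

lemma bform_smul' (x y : Fin 11 → ℤ) :
    bform gramT ((2 : ℤ) • x) y = 2 * bform gramT x y := by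
  simp only [bform_eq, Pi.smul_apply, smul_eq_mul]; ring

/-- a vector with even first coordinate and even pairing with T₀ is in 2T -/
lemma exists_half (v : Fin 11 → ℤ) (h0 : Even (v 0))
    (h : ∀ z : Fin 11 → ℤ, Even (z 0) → Even (bform gramT v z)) :
    ∀ i, (2 : ℤ) * (v i / 2) = v i := by
  have h1 := h (Pi.single 1 1) (by simp)
  have h2 := h (Pi.single 2 1) (by simp)
  have h3 := h (Pi.single 3 1) (by simp)
  have h4 := h (Pi.single 4 1) (by simp)
  have h5 := h (Pi.single 5 1) (by simp)
  have h6 := h (Pi.single 6 1) (by simp)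
  have h7 := h (Pi.single 7 1) (by simp)
  have h8 := h (Pi.single 8 1) (by simp)
  have h9 := h (Pi.single 9 1) (by simp)
  have h10 := h (Pi.single 10 1) (by simp)
  clear h
  simp [bform_eq, Int.even_add, Int.even_sub] at h1 h2 h3 h4 h5 h6 h7 h8 h9 h10
  have key : ∀ i, Even (v i) := by
    intro i
    fin_cases i <;> simp <;> tauto
  intro i
  exact Int.mul_ediv_cancel' (key i).two_dvd

lemma exists_ext (S : Submodule ℤ (Fin 11 → ℤ)) (hS : ∀ x, x ∈ S ↔ Even (bform gramT x x))
    (g : S ≃ₗ[ℤ] S) (hg : ∀ x y : S, bform gramT (g x) (g y) = bform gramT x y) :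
    ∃ f : (Fin 11 → ℤ) →ₗ[ℤ] (Fin 11 → ℤ),
      ∀ (x : Fin 11 → ℤ) (hx : (2 : ℤ) • x ∈ S), (2 : ℤ) • f x = (g ⟨(2 : ℤ) • x, hx⟩ : Fin 11 → ℤ) := by
  have mem : ∀ x : Fin 11 → ℤ, (2 : ℤ) • x ∈ S := fun x => by
    rw [hS, even_iff]; simp
  have key : ∀ x, ∃ y : Fin 11 → ℤ, (2 : ℤ) • y = (g ⟨(2 : ℤ) • x, mem x⟩ : Fin 11 → ℤ) := by
    intro x
    refine ⟨fun i => (g ⟨(2 : ℤ) • x, mem x⟩ : Fin 11 → ℤ) i / 2, ?_⟩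
    ext i
    refine exists_half _ ?_ ?_ i
    · rw [← even_iff, ← hS]; exact (g _).2
    · intro z hz
      have hz' : z ∈ S := by rw [hS, even_iff]; exact hz
      have := hg ⟨(2 : ℤ) • x, mem x⟩ (g.symm ⟨z, hz'⟩)
      rw [g.apply_symm_apply] at this
      simp only [bform_smul'] at this
      rw [this]; simp
  choose F hF using key
  have inj : Function.Injective (fun y : Fin 11 → ℤ => (2 : ℤ) • y) :=
    smul_right_injective _ (by norm_num)
  refine ⟨{ toFun := F, map_add' := ?_, map_smul' := ?_ }, fun x _ => hF x⟩
  · intro x y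
    apply inj
    simp only [smul_add, hF]
    rw [← Submodule.coe_add, ← map_add]
    rfl
  · intro c x
    apply inj
    simp only [RingHom.id_apply]
    rw [smul_comm, hF, hF, ← Submodule.coe_smul, ← map_smul]
    congr 2
    ext1
    exact smul_comm _ _ _

/-- Every isometry of the odd unimodular lattice `T = ⟨1⟩ ⊕ U ⊕ E8` maps the even sublattice
`T₀` onto itself, and restriction `O(T) → O(T₀)` is bijective: every isometry of `T₀`
is the restriction of a unique isometry of `T` (so restriction is a group isomorphism). -/
theorem isometries_restrict_even_sublattice
    (S : Submodule ℤ (Fin 11 → ℤ)) (hS : ∀ x, x ∈ S ↔ Even (bform gramT x x)) :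
    (∀ f : (Fin 11 → ℤ) ≃ₗ[ℤ] (Fin 11 → ℤ), IsIsometry gramT f →
      ∀ x, f x ∈ S ↔ x ∈ S) ∧
    (∀ g : S ≃ₗ[ℤ] S, (∀ x y : S, bform gramT (g x) (g y) = bform gramT x y) →
      ∃! f : {f : (Fin 11 → ℤ) ≃ₗ[ℤ] (Fin 11 → ℤ) // IsIsometry gramT f},
        ∀ x : S, (f : (Fin 11 → ℤ) ≃ₗ[ℤ] (Fin 11 → ℤ)) x = (g x : Fin 11 → ℤ)) := by
  have mem : ∀ x : Fin 11 → ℤ, (2 : ℤ) • x ∈ S := fun x => by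
    rw [hS, even_iff]; simp
  have inj : Function.Injective (fun y : Fin 11 → ℤ => (2 : ℤ) • y) :=
    smul_right_injective _ (by norm_num)
  refine ⟨fun f hf x => by rw [hS, hS, hf], ?_⟩
  intro g hg
  obtain ⟨f, hf⟩ := exists_ext S hS g hg
  obtain ⟨f', hf'⟩ := exists_ext S hS g.symm (fun x y => by
    rw [← hg, g.apply_symm_apply, g.apply_symm_apply])
  have e1 : ∀ x, f (f' x) = x := fun x => by
    apply inj
    have h1 := hf (f' x) (mem _)
    have h2 : (⟨(2 : ℤ) • f' x, mem _⟩ : S) = g.symm ⟨(2 : ℤ) • x, mem x⟩ :=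
      Subtype.ext (hf' x (mem x))
    rw [h2, g.apply_symm_apply] at h1
    exact h1
  have e2 : ∀ x, f' (f x) = x := fun x => by
    apply inj
    have h1 := hf' (f x) (mem _)
    have h2 : (⟨(2 : ℤ) • f x, mem _⟩ : S) = g ⟨(2 : ℤ) • x, mem x⟩ :=
      Subtype.ext (hf x (mem x))
    rw [h2, g.symm_apply_apply] at h1
    exact h1
  have hiso : ∀ x y, bform gramT (f x) (f y) = bform gramT x y := by
    intro x y
    have h := hg ⟨_, mem x⟩ ⟨_, mem y⟩
    rw [← hf, ← hf, bform_smul, bform_smul] at h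
    linarith
  refine ⟨⟨LinearEquiv.ofLinearMap f f' (LinearMap.ext e1) (LinearMap.ext e2), hiso⟩, ?_, ?_⟩
  · intro x
    apply inj
    change (2 : ℤ) • f x = (2 : ℤ) • (g x : Fin 11 → ℤ)
    have h2 : g ⟨(2 : ℤ) • (x : Fin 11 → ℤ), mem x⟩ = (2 : ℤ) • g x := by
      rw [← map_smul]; rfl
    rw [hf x (mem x), h2]
    rfl
  · rintro ⟨k, hk⟩ hkg
    apply Subtype.ext
    apply LinearEquiv.ext
    intro x
    apply inj
    change (2 : ℤ) • k x = (2 : ℤ) • f x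
    rw [hf x (mem x), ← hkg, ← map_smul]
end

section
/- Let M be the even lattice U ⊕ D9 of rank 11. Then the natural homomorphism O(M) → O(q_M), sending an integral isometry of M to the induced automorphism of the discriminant group A_M preserving the discriminant quadratic form q_M, is surjective. -/
open Matrix

/-- The negative definite lattice `D₉` (negative of the Cartan matrix of `D₉`). -/
abbrev latD9 : Matrix (Fin 9) (Fin 9) ℤ :=
  !![-2,  1,  0,  0,  0,  0,  0,  0,  0;
      1, -2,  1,  0,  0,  0,  0,  0,  0;
      0,  1, -2,  1,  0,  0,  0,  0,  0;
      0,  0,  1, -2,  1,  0,  0,  0,  0;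
      0,  0,  0,  1, -2,  1,  0,  0,  0;
      0,  0,  0,  0,  1, -2,  1,  0,  0;
      0,  0,  0,  0,  0,  1, -2,  1,  1;
      0,  0,  0,  0,  0,  0,  1, -2,  0;
      0,  0,  0,  0,  0,  0,  1,  0, -2]

/-- Coordinatewise coercion `ℤⁿ → ℚⁿ` as a `ℤ`-linear map. -/
def castMap (n : ℕ) : (Fin n → ℤ) →ₗ[ℤ] (Fin n → ℚ) :=
  (Algebra.linearMap ℤ ℚ).compLeft (Fin n)

/-- The standard lattice `ℤⁿ ⊆ ℚⁿ`. -/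
def intLat (n : ℕ) : Submodule ℤ (Fin n → ℚ) := LinearMap.range (castMap n)

/-- The dual lattice `L* = {x ∈ ℚⁿ : Gx ∈ ℤⁿ}` of the lattice with Gram matrix `G`. -/
def dualLat {n : ℕ} (G : Matrix (Fin n) (Fin n) ℤ) : Submodule ℤ (Fin n → ℚ) :=
  Submodule.comap ((Matrix.mulVecLin (G.map (Int.cast : ℤ → ℚ))).restrictScalars ℤ) (intLat n)

/-- The discriminant group `A_L = L*/ℤⁿ`. -/
abbrev discGroup {n : ℕ} (G : Matrix (Fin n) (Fin n) ℤ) :=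
  dualLat G ⧸ (intLat n).comap (dualLat G).subtype

/-- The class of a dual vector in the discriminant group `A_L`. -/
def dmk {n : ℕ} {G : Matrix (Fin n) (Fin n) ℤ} (x : dualLat G) : discGroup G :=
  Submodule.Quotient.mk x

/-- The rational quadratic form `x ↦ xᵀGx` on `ℚⁿ`; on the dual lattice of an even lattice,
its reduction mod `2ℤ` is the discriminant quadratic form `q_L`. -/
def qQ {n : ℕ} (G : Matrix (Fin n) (Fin n) ℤ) (x : Fin n → ℚ) : ℚ :=
  x ⬝ᵥ (G.map (Int.cast : ℤ → ℚ)).mulVec x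

/-- An automorphism of the discriminant group preserves the discriminant quadratic form
`q_L : A_L → ℚ/2ℤ`. -/
def PreservesDiscForm {n : ℕ} {G : Matrix (Fin n) (Fin n) ℤ}
    (φ : discGroup G ≃+ discGroup G) : Prop :=
  ∀ x y : dualLat G, φ (dmk x) = dmk y →
    ∃ m : ℤ, qQ G (y : Fin n → ℚ) - qQ G (x : Fin n → ℚ) = 2 * m

/-- `M = U ⊕ D9`, an even lattice of rank 11. -/
def gramM : Matrix (Fin 11) (Fin 11) ℤ := dsum latU latD9


lemma gramM_eq : gramM = !![0, 1, 0, 0, 0, 0, 0, 0, 0, 0, 0; 1, 0, 0, 0, 0, 0, 0, 0, 0, 0, 0; 0, 0, -2, 1, 0, 0, 0, 0, 0, 0, 0; 0, 0, 1, -2, 1, 0, 0, 0, 0, 0, 0; 0, 0, 0, 1, -2, 1, 0, 0, 0, 0, 0; 0, 0, 0, 0, 1, -2, 1, 0, 0, 0, 0; 0, 0, 0, 0, 0, 1, -2, 1, 0, 0, 0; 0, 0, 0, 0, 0, 0, 1, -2, 1, 0, 0; 0, 0, 0, 0, 0, 0, 0, 1, -2, 1, 1; 0, 0, 0, 0, 0,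 0, 0, 0, 1, -2, 0; 0, 0, 0, 0, 0, 0, 0, 0, 1, 0, -2] := by
  unfold gramM dsum
  decide +kernel

/-- A dual vector generating the discriminant group. -/
def gvec : Fin 11 → ℚ := ![0, 0, 1/2, 1, 3/2, 2, 5/2, 3, 7/2, 7/4, 9/4]

lemma mem_intLat {n : ℕ} (x : Fin n → ℚ) : x ∈ intLat n ↔ ∃ a : Fin n → ℤ, ∀ i, (a i : ℚ) = x i := by
  unfold intLat castMap
  constructor
  · rintro ⟨a, rfl⟩
    exact ⟨a, fun i => rfl⟩
  · rintro ⟨a, h⟩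
    exact ⟨a, funext h⟩

lemma mem_dual (x : Fin 11 → ℚ) : x ∈ dualLat gramM ↔
    ∃ a : Fin 11 → ℤ, ∀ i, (a i : ℚ) = ((gramM.map (Int.cast : ℤ → ℚ)).mulVec x) i := by
  unfold dualLat
  rw [Submodule.mem_comap, mem_intLat]
  rfl

lemma gvec_mem : gvec ∈ dualLat gramM := by
  rw [mem_dual]
  refine ⟨![0,0,0,0,0,0,0,0,0,0,-1], ?_⟩
  intro i
  rw [gramM_eq]
  fin_cases i <;> simp [gvec, Matrix.mulVec, dotProduct, Fin.sum_univ_succ] <;> norm_num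

/-- The generator as an element of the dual lattice. -/
def gd : dualLat gramM := ⟨gvec, gvec_mem⟩

lemma dmk_eq (x y : dualLat gramM) : dmk x = dmk y ↔
    ∃ a : Fin 11 → ℤ, ∀ i, (a i : ℚ) = (x : Fin 11 → ℚ) i - (y : Fin 11 → ℚ) i := by
  unfold dmk
  rw [Submodule.Quotient.eq, Submodule.mem_comap, mem_intLat]
  rfl

lemma dmk_zsmul (k : ℤ) (x : dualLat gramM) : dmk (k • x) = k • dmk x := rfl

lemma dmk_neg (x : dualLat gramM) : dmk (-x) = - dmk x := rfl

lemma gen (x : dualLat gramM) : ∃ k : ℤ, dmk x = k • dmk gd := by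
  obtain ⟨a, ha⟩ := (mem_dual x).1 x.2
  refine ⟨(2) * a 2 + (4) * a 3 + (6) * a 4 + (8) * a 5 + (10) * a 6 + (12) * a 7 + (14) * a 8 + (9) * a 9 + (7) * a 10, ?_⟩
  rw [← dmk_zsmul, dmk_eq]
  refine ⟨![(1) * a 1, (1) * a 0, (-2) * a 2 + (-3) * a 3 + (-4) * a 4 + (-5) * a 5 + (-6) * a 6 + (-7) * a 7 + (-8) * a 8 + (-5) * a 9 + (-4) * a 10, (-3) * a 2 + (-6) * a 3 + (-8) * a 4 + (-10) * a 5 + (-12) * a 6 + (-14) * a 7 + (-16) * a 8 + (-10) * a 9 + (-8) * a 10, (-4) * a 2 + (-8) * a 3 + (-12) * a 4 + (-15) * a 5 + (-18) * a 6 + (-21) * a 7 + (-24) * a 8 + (-15) * a 9 + (-12) * a 10, (-5) * a 2 + (-10) * a 3 + (-15) * a 4 + (-20) * a 5 + (-24) * a 6 + (-28) * a 7 + (-32) * a 8 + (-20) * a 9 + (-16) * a 10, (-6) * a 2 + (-12) * a 3 + (-18) * a 4 + (-24) * a 5 + (-30) * a 6 + (-35) * a 7 + (-40) * a 8 + (-25)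 * a 9 + (-20) * a 10, (-7) * a 2 + (-14) * a 3 + (-21) * a 4 + (-28) * a 5 + (-35) * a 6 + (-42) * a 7 + (-48) * a 8 + (-30) * a 9 + (-24) * a 10, (-8) * a 2 + (-16) * a 3 + (-24) * a 4 + (-32) * a 5 + (-40) * a 6 + (-48) * a 7 + (-56) * a 8 + (-35) * a 9 + (-28) * a 10, (-4) * a 2 + (-8) * a 3 + (-12) * a 4 + (-16) * a 5 + (-20) * a 6 + (-24) * a 7 + (-28) * a 8 + (-18) * a 9 + (-14) * a 10, (-5) * a 2 + (-10) * a 3 + (-15) * a 4 + (-20) * a 5 + (-25) * a 6 + (-30) * a 7 + (-35) * a 8 + (-22) * a 9 + (-18) * a 10], ?_⟩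
  have hs : ∀ (k : ℤ) i, ((k • gd : dualLat gramM) : Fin 11 → ℚ) i = k * gvec i := by
    intro k i
    simp [gd]
  obtain ⟨z, hz⟩ : ∃ z : Fin 11 → ℚ, z = x := ⟨_, rfl⟩
  rw [← hz] at ha ⊢
  rw [gramM_eq] at ha
  have h0 := ha 0
  have h1 := ha 1
  have h2 := ha 2
  have h3 := ha 3
  have h4 := ha 4
  have h5 := ha 5
  have h6 := ha 6
  have h7 := ha 7
  have h8 := ha 8
  have h9 := ha 9
  have h10 := ha 10
  simp [Matrix.mulVec, dotProduct, Fin.sum_univ_succ] at h0 h1 h2 h3 h4 h5 h6 h7 h8 h9 h10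
  intro i
  rw [hs]
  fin_cases i <;> simp [gvec] <;> grind

lemma four_g : (4 : ℤ) • dmk gd = 0 := by
  have h : dmk ((4 : ℤ) • gd) = dmk (0 : dualLat gramM) := by
    rw [dmk_eq]
    refine ⟨![0, 0, 2, 4, 6, 8, 10, 12, 14, 7, 9], ?_⟩
    intro i
    fin_cases i <;> simp [gd, gvec] <;> norm_num
  exact h

lemma two_g : (2 : ℤ) • dmk gd ≠ 0 := by
  intro h
  have h' : dmk ((2 : ℤ) • gd) = dmk (0 : dualLat gramM) := h
  rw [dmk_eq] at h'
  obtain ⟨a, ha⟩ := h'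
  have h9 := ha 9
  simp [gd, gvec] at h9
  have : ((2 * a 9 : ℤ) : ℚ) = (7 : ℤ) := by push_cast; linarith
  have := Int.cast_injective this
  omega

/-- The natural homomorphism `O(M) → O(q_M)` is surjective for `M = U ⊕ D9` :
every automorphism of the discriminant group preserving the discriminant quadratic form
is induced by an integral isometry `P` of `M` (which acts on `M* ⊆ ℚ¹¹` by `x ↦ Px`). -/
theorem O_to_Oq_surjective_UD9 :
    ∀ φ : discGroup gramM ≃+ discGroup gramM, PreservesDiscForm φ →
      ∃ P : Matrix (Fin 11) (Fin 11) ℤ, IsUnit P.det ∧ Pᵀ * gramM * P = gramM ∧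
        ∀ x y : dualLat gramM,
          (y : Fin 11 → ℚ) = (P.map (Int.cast : ℤ → ℚ)).mulVec (x : Fin 11 → ℚ) →
            φ (dmk x) = dmk y := by
  intro φ _
  have hg : φ (dmk gd) = dmk gd ∨ φ (dmk gd) = - dmk gd := by
    obtain ⟨y, hy⟩ := Submodule.Quotient.mk_surjective _ (φ (dmk gd))
    obtain ⟨k, hk⟩ := gen y
    have hk' : φ (dmk gd) = k • dmk gd := hy.symm.trans hk
    have h4 := four_g
    have hcases : k % 2 = 0 ∨ k % 4 = 1 ∨ k % 4 = 3 := by omega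
    rcases hcases with h | h | h
    · exfalso
      apply two_g
      apply φ.injective
      obtain ⟨m, rfl⟩ : ∃ m, k = m * 2 := ⟨k / 2, by omega⟩
      rw [map_zsmul, hk', smul_smul, show (2 : ℤ) * (m * 2) = m * 4 by ring, mul_smul, h4,
        smul_zero, map_zero]
    · left
      obtain ⟨m, rfl⟩ : ∃ m, k = m * 4 + 1 := ⟨k / 4, by omega⟩
      rw [hk', add_smul, mul_smul, h4, smul_zero, zero_add, one_smul]
    · right
      obtain ⟨m, rfl⟩ : ∃ m, k = m * 4 + -1 := ⟨k / 4 + 1, by omega⟩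
      rw [hk', add_smul, mul_smul, h4, smul_zero, zero_add, neg_smul, one_smul]
  rcases hg with hg | hg
  · refine ⟨1, by simp, by simp, ?_⟩
    intro x y hxy
    have : y = x := by
      apply Subtype.ext
      rw [hxy]
      simp
    subst this
    obtain ⟨k, hk⟩ := gen y
    rw [hk, map_zsmul, hg]
  · refine ⟨-1, by simp [Matrix.det_neg], by simp, ?_⟩
    intro x y hxy
    have : y = -x := by
      apply Subtype.ext
      rw [hxy]
      ext i
      have : ((-1 : Matrix (Fin 11) (Fin 11) ℤ).map (Int.cast : ℤ → ℚ)) = -1 := by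
        ext i j
        by_cases h : i = j <;> simp [Matrix.one_apply, h]
      rw [this, Matrix.neg_mulVec, Matrix.one_mulVec]
      rfl
    subst this
    obtain ⟨k, hk⟩ := gen x
    rw [dmk_neg, hk, map_zsmul, hg, smul_neg]
end

section
/- The rank-11 lattice ⟨2⟩ ⊕ ⟨-2⟩^{⊕10} (Gram matrix diag(2,-2,-2,...,-2)) is isometric to the lattice U(2) ⊕ E8(2) ⊕ ⟨-2⟩. -/
open Matrix

/-- `⟨2⟩ ⊕ ⟨-2⟩^{⊕10}`, the Gram matrix `diag(2,-2,…,-2)` of rank 11. -/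
def gramA : Matrix (Fin 11) (Fin 11) ℤ :=
  Matrix.diagonal ![2, -2, -2, -2, -2, -2, -2, -2, -2, -2, -2]

/-- `U(2) ⊕ E8(2) ⊕ ⟨-2⟩`. -/
def gramB : Matrix (Fin 11) (Fin 11) ℤ := dsum (dsum (2 • latU) (2 • latE8)) !![(-2 : ℤ)]

/-- The lattice `⟨2⟩ ⊕ ⟨-2⟩^{⊕10}` is isometric to `U(2) ⊕ E8(2) ⊕ ⟨-2⟩`. -/
theorem coble_lattice_isometry :
    ∃ P : Matrix (Fin 11) (Fin 11) ℤ, IsUnit P.det ∧ Pᵀ * gramB * P = gramA := by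
  let P : Matrix (Fin 11) (Fin 11) ℤ :=
    !![3, -1, -1, -1, -1, -1, -1, -1, -1, 0, -1;
      3, -1, -1, -1, -1, -1, -1, -1, -1, -1, 0;
      5, -1, -2, -2, -2, -2, -2, -2, -2, 0, 0;
      8, -3, -3, -3, -3, -3, -3, -3, -3, 0, 0;
      10, -3, -3, -4, -4, -4, -4, -4, -4, 0, 0;
      15, -5, -5, -5, -6, -6, -6, -6, -6, 0, 0;
      12, -4, -4, -4, -4, -5, -5, -5, -5, 0, 0;
      9, -3, -3, -3, -3, -3, -4, -4, -4, 0, 0;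
      6, -2, -2, -2, -2, -2, -2, -3, -3, 0, 0;
      3, -1, -1, -1, -1, -1, -1, -1, -2, 0, 0;
      -3, 1, 1, 1, 1, 1, 1, 1, 1, 1, 1]
  let Q : Matrix (Fin 11) (Fin 11) ℤ :=
    !![3, 3, 0, -1, 0, 0, 0, 0, 0, 0, 3;
      1, 1, 1, -1, 0, 0, 0, 0, 0, 0, 1;
      1, 1, -1, -1, 1, 0, 0, 0, 0, 0, 1;
      1, 1, 0, -1, -1, 1, 0, 0, 0, 0, 1;
      1, 1, 0, 0, 0, -1, 1, 0, 0, 0, 1;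
      1, 1, 0, 0, 0, 0, -1, 1, 0, 0, 1;
      1, 1, 0, 0, 0, 0, 0, -1, 1, 0, 1;
      1, 1, 0, 0, 0, 0, 0, 0, -1, 1, 1;
      1, 1, 0, 0, 0, 0, 0, 0, 0, -1, 1;
      1, 0, 0, 0, 0, 0, 0, 0, 0, 0, 1;
      0, 1, 0, 0, 0, 0, 0, 0, 0, 0, 1]
  have hPQ : P * Q = 1 := by
    decide +kernel
  refine ⟨P, ?_, ?_⟩
  · apply IsUnit.of_mul_eq_one Q.det
    rw [← Matrix.det_mul, hPQ, Matrix.det_one]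
  · decide +kernel
end

section
/- In the rank-12 lattice L = U ⊕ U(2) ⊕ E8(2) (which is U ⊕ 𝔼(2) where 𝔼 = E8 ⊕ U is the Enriques lattice), there exists a vector v with norm v·v = -2 such that the orthogonal complement v^⊥ = {x ∈ L : x·v = 0}, with the restricted form, is isometric to the rank-11 lattice ⟨2⟩ ⊕ U(2) ⊕ E8(2). -/
open Matrix

/-- `L = U ⊕ U(2) ⊕ E8(2) = U ⊕ 𝔼(2)` where `𝔼 = E8 ⊕ U` is the Enriques lattice. -/
def gramL : Matrix (Fin 12) (Fin 12) ℤ := dsum (dsum latU (2 • latU)) (2 • latE8)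

/-- `⟨2⟩ ⊕ U(2) ⊕ E8(2)`. -/
def gramC : Matrix (Fin 11) (Fin 11) ℤ := dsum (dsum !![(2 : ℤ)] (2 • latU)) (2 • latE8)

def gramR : Matrix (Fin 10) (Fin 10) ℤ := dsum (2 • latU) (2 • latE8)

theorem bformL_eq (x y : Fin 12 → ℤ) : bform gramL x y =
    x 0 * y 1 + x 1 * y 0 + bform gramR (Fin.tail (Fin.tail x)) (Fin.tail (Fin.tail y)) := by
  have h : ∀ i j : Fin 10, gramL i.succ.succ j.succ.succ = gramR i j := by
    intro i j
    fin_cases i <;> fin_cases j <;> rfl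
  have h0 : ∀ j : Fin 12, gramL 0 j = if j = 1 then 1 else 0 := by decide
  have h1 : ∀ j : Fin 12, gramL 1 j = if j = 0 then 1 else 0 := by decide
  have h0' : ∀ j : Fin 10, gramL j.succ.succ 0 = 0 := by decide
  have h1' : ∀ j : Fin 10, gramL j.succ.succ 1 = 0 := by decide
  unfold bform dotProduct mulVec dotProduct
  rw [Fin.sum_univ_succ, Fin.sum_univ_succ (n := 10), ← add_assoc]
  congr 1
  · congr 1
    · simp [h0]
    · simp [h1]
  · refine Finset.sum_congr rfl fun i _ => ?_
    rw [Fin.sum_univ_succ, Fin.sum_univ_succ (n := 10)]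
    simp [h, h0', h1', Fin.tail]

theorem bformC_eq (x y : Fin 11 → ℤ) : bform gramC x y =
    2 * (x 0 * y 0) + bform gramR (Fin.tail x) (Fin.tail y) := by
  have h : ∀ i j : Fin 10, gramC i.succ j.succ = gramR i j := by
    intro i j
    fin_cases i <;> fin_cases j <;> rfl
  have h0 : ∀ j : Fin 11, gramC 0 j = if j = 0 then 2 else 0 := by decide
  have h0' : ∀ j : Fin 10, gramC j.succ 0 = 0 := by decide
  unfold bform dotProduct mulVec dotProduct
  rw [Fin.sum_univ_succ]
  congr 1
  · simp [h0]; ring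
  · refine Finset.sum_congr rfl fun i _ => ?_
    rw [Fin.sum_univ_succ]
    simp [h, h0', Fin.tail]

theorem bformL_v (x : Fin 12 → ℤ) :
    bform gramL x (Fin.cons 1 (Fin.cons (-1) 0)) = x 1 - x 0 := by
  rw [bformL_eq]
  have : Fin.tail (Fin.tail (Fin.cons 1 (Fin.cons (-1) 0) : Fin 12 → ℤ)) = (0 : Fin 10 → ℤ) := rfl
  rw [this]
  have h1 : (Fin.cons 1 (Fin.cons (-1) 0) : Fin 12 → ℤ) 1 = -1 := rfl
  have h0 : (Fin.cons 1 (Fin.cons (-1) 0) : Fin 12 → ℤ) 0 = 1 := rfl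
  rw [h0, h1]
  simp [bform]
  ring

/-- In `L = U ⊕ U(2) ⊕ E8(2)` there is a vector `v` of norm `-2` whose orthogonal
complement `v^⊥`, with the restricted form, is isometric to `⟨2⟩ ⊕ U(2) ⊕ E8(2)`. -/
theorem exists_norm_neg_two_orthogonal_complement :
    ∃ v : Fin 12 → ℤ, bform gramL v v = -2 ∧
      ∃ W : Submodule ℤ (Fin 12 → ℤ), (∀ x, x ∈ W ↔ bform gramL x v = 0) ∧
        ∃ e : W ≃ₗ[ℤ] (Fin 11 → ℤ),
          ∀ x y : W, bform gramC (e x) (e y) = bform gramL x y := by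
  refine ⟨Fin.cons 1 (Fin.cons (-1) 0), ?_, ?_⟩
  · rw [bformL_v]; rfl
  · refine ⟨LinearMap.ker ((LinearMap.proj 1 : (Fin 12 → ℤ) →ₗ[ℤ] ℤ) - LinearMap.proj 0), ?_, ?_⟩
    · intro x
      rw [bformL_v, LinearMap.mem_ker]
      rfl
    · refine ⟨{ toFun := fun x => Fin.tail x.1
                map_add' := fun _ _ => rfl
                map_smul' := fun _ _ => rfl
                invFun := fun y => ⟨Fin.cons (y 0) y, sub_self (y 0)⟩
                left_inv := ?_
                right_inv := fun _ => rfl }, ?_⟩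
      · rintro ⟨x, hx⟩
        have hx' : x 1 - x 0 = 0 := hx
        apply Subtype.ext
        change (Fin.cons (x 1) (Fin.tail x) : Fin 12 → ℤ) = x
        rw [sub_eq_zero.1 hx']
        exact Fin.cons_self_tail x
      · rintro ⟨x, hx⟩ ⟨y, hy⟩
        have hx' : x 1 - x 0 = 0 := hx
        have hy' : y 1 - y 0 = 0 := hy
        change bform gramC (Fin.tail x) (Fin.tail y) = bform gramL x y
        rw [bformC_eq, bformL_eq]
        change 2 * (x 1 * y 1) + _ = _
        rw [sub_eq_zero.1 hx', sub_eq_zero.1 hy']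
        ring
end

section
/- Let V' ⊂ ℂ[x0,x1,x2] be the linear subspace of homogeneous quintic forms of the shape F = a·x0³x1² + x0²·A1(x1,x2) + x0·x2·A2(x1,x2) + x2²·A3(x1,x2), where a ∈ ℂ and A1, A2, A3 are homogeneous polynomials in x1, x2 of degree 3 (so dim V' = 13). Then an invertible linear change of coordinates T ∈ GL3(ℂ) satisfies F∘T ∈ V' for every F ∈ V' if and only if T has the form x0 ↦ a·x0 + b·x2, x1 ↦ c·x1, x2 ↦ d·x2 (with a, c, d nonzero). -/
open MvPolynomial

/-- The linear substitution action of a matrix `T ∈ GL₃(ℂ)` on polynomials: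
`(F ∘ T)(x) = F (T x)`, i.e. `xᵢ ↦ ∑ⱼ Tᵢⱼ xⱼ`. -/
noncomputable def subst (T : Matrix (Fin 3) (Fin 3) ℂ) (F : MvPolynomial (Fin 3) ℂ) :
    MvPolynomial (Fin 3) ℂ :=
  aeval (fun i => ∑ j : Fin 3, C (T i j) * X j) F

/-- The space `V'` of quintic forms
`a·x0³x1² + x0²·A1(x1,x2) + x0·x2·A2(x1,x2) + x2²·A3(x1,x2)` with `A1, A2, A3`
homogeneous of degree 3 in the variables `x1, x2`. -/
def Vspace' : Set (MvPolynomial (Fin 3) ℂ) :=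
  {F | ∃ (a : ℂ) (A1 A2 A3 : MvPolynomial (Fin 3) ℂ),
    A1.IsHomogeneous 3 ∧ A1 ∈ supported ℂ ({1, 2} : Set (Fin 3)) ∧
    A2.IsHomogeneous 3 ∧ A2 ∈ supported ℂ ({1, 2} : Set (Fin 3)) ∧
    A3.IsHomogeneous 3 ∧ A3 ∈ supported ℂ ({1, 2} : Set (Fin 3)) ∧
    F = C a * X 0 ^ 3 * X 1 ^ 2 + X 0 ^ 2 * A1 + X 0 * X 2 * A2 + X 2 ^ 2 * A3}


theorem vs_eval_congr {A : MvPolynomial (Fin 3) ℂ} (hA : A ∈ supported ℂ ({1, 2} : Set (Fin 3)))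
    (v w : Fin 3 → ℂ) (h1 : v 1 = w 1) (h2 : v 2 = w 2) : eval v A = eval w A := by
  have : supported ℂ ({1, 2} : Set (Fin 3)) ≤ AlgHom.equalizer (aeval v : _ →ₐ[ℂ] ℂ) (aeval w) := by
    unfold supported
    rw [Algebra.adjoin_le_iff]
    rintro _ ⟨i, hi, rfl⟩
    rcases hi with rfl | rfl <;> simp [AlgHom.mem_equalizer, h1, h2]
  have h := this hA
  rw [AlgHom.mem_equalizer] at h
  simpa [coe_aeval_eq_eval] using h

theorem vs_zero {A : MvPolynomial (Fin 3) ℂ} (hA : A ∈ supported ℂ ({1, 2} : Set (Fin 3)))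
    (hh : A.IsHomogeneous 3) : eval ![1, 0, 0] A = 0 := by
  rw [vs_eval_congr hA ![1, 0, 0] 0 (by simp) (by simp)]
  have h := IsHomogeneous.coeff_eq_zero hh (d := 0) (by simp)
  simpa [constantCoeff_eq, eval_zero] using h

theorem vs_props {F : MvPolynomial (Fin 3) ℂ} (hF : F ∈ Vspace') :
    eval ![1, 0, 0] F = 0 ∧ eval ![0, 1, 0] F = 0 ∧
    eval ![3, 0, 1] F - 3 * eval ![2, 0, 1] F + 3 * eval ![1, 0, 1] F - eval ![0, 0, 1] F = 0 := by
  obtain ⟨a, A1, A2, A3, h1, s1, h2, s2, h3, s3, rfl⟩ := hF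
  have e : ∀ A ∈ supported ℂ ({1, 2} : Set (Fin 3)), ∀ t : ℂ,
      eval ![t, 0, 1] A = eval ![0, 0, 1] A := fun A hA t =>
    vs_eval_congr hA _ _ (by simp) (by simp)
  refine ⟨?_, ?_, ?_⟩
  · simp [vs_zero s1 h1]
  · simp
  · simp only [map_add, map_mul, map_pow, eval_C, eval_X]
    rw [e A1 s1 3, e A1 s1 2, e A1 s1 1, e A2 s2 3, e A2 s2 2, e A2 s2 1,
      e A3 s3 3, e A3 s3 2, e A3 s3 1]
    simp
    ring

theorem eval_subst (T : Matrix (Fin 3) (Fin 3) ℂ) (F : MvPolynomial (Fin 3) ℂ) (v : Fin 3 → ℂ) :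
    eval v (subst T F) = eval (fun i => T i 0 * v 0 + T i 1 * v 1 + T i 2 * v 2) F := by
  unfold subst
  induction F using MvPolynomial.induction_on with
  | C a => simp [algebraMap_eq]
  | add p q hp hq => simp only [map_add, hp, hq]
  | mul_X p i hp => simp only [map_mul, hp, aeval_X, map_sum, eval_C, eval_X]; rw [Fin.sum_univ_three]

theorem mon_hom (i j k : Fin 3) : (X i * X j * X k : MvPolynomial (Fin 3) ℂ).IsHomogeneous 3 :=
  ((isHomogeneous_X ℂ i).mul (isHomogeneous_X ℂ j)).mul (isHomogeneous_X ℂ k)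

theorem mon_supp (i j k : Fin 3) (hi : i ≠ 0) (hj : j ≠ 0) (hk : k ≠ 0) :
    (X i * X j * X k : MvPolynomial (Fin 3) ℂ) ∈ supported ℂ ({1, 2} : Set (Fin 3)) := by
  have : ∀ i : Fin 3, i ≠ 0 → i ∈ ({1, 2} : Set (Fin 3)) := by
    intro i hi; fin_cases i <;> simp_all
  exact mul_mem (mul_mem (X_mem_supported.2 (this i hi)) (X_mem_supported.2 (this j hj)))
    (X_mem_supported.2 (this k hk))

/-- Homogeneous cubics in the last two variables. -/
noncomputable def Cub : Submodule ℂ (MvPolynomial (Fin 3) ℂ) :=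
  homogeneousSubmodule (Fin 3) ℂ 3 ⊓ Subalgebra.toSubmodule (supported ℂ ({1, 2} : Set (Fin 3)))

theorem mem_Cub (A : MvPolynomial (Fin 3) ℂ) :
    A ∈ Cub ↔ A.IsHomogeneous 3 ∧ A ∈ supported ℂ ({1, 2} : Set (Fin 3)) := Iff.rfl

theorem Cub_smul (c : ℂ) {A : MvPolynomial (Fin 3) ℂ} (hA : A ∈ Cub) : C c * A ∈ Cub := by
  rw [← smul_eq_C_mul]; exact Cub.smul_mem c hA

theorem Cub_subst (a b c d : ℂ) {A : MvPolynomial (Fin 3) ℂ} (hA : A ∈ Cub) :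
    subst !![a, 0, b; 0, c, 0; 0, 0, d] A ∈ Cub := by
  refine ⟨?_, ?_⟩
  · have := IsHomogeneous.aeval hA.1
      (fun i => ∑ j : Fin 3, C (!![a, 0, b; 0, c, 0; 0, 0, d] i j) * X j) (n := 1)
      (fun i => IsHomogeneous.sum _ _ _ fun j _ => isHomogeneous_C_mul_X _ _)
    rw [one_mul] at this
    exact this
  · have : supported ℂ ({1, 2} : Set (Fin 3)) ≤ (supported ℂ ({1, 2} : Set (Fin 3))).comap
        (aeval (fun i => ∑ j : Fin 3, C (!![a, 0, b; 0, c, 0; 0, 0, d] i j) * X j)) := by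
      conv_lhs => unfold supported
      rw [Algebra.adjoin_le_iff]
      rintro _ ⟨i, hi, rfl⟩
      rcases hi with rfl | rfl
      · simpa [Fin.sum_univ_three] using mul_mem ((supported ℂ ({1, 2} : Set (Fin 3))).algebraMap_mem c)
          (X_mem_supported.2 (by simp : (1 : Fin 3) ∈ ({1, 2} : Set (Fin 3))))
      · simpa [Fin.sum_univ_three] using mul_mem ((supported ℂ ({1, 2} : Set (Fin 3))).algebraMap_mem d)
          (X_mem_supported.2 (by simp : (2 : Fin 3) ∈ ({1, 2} : Set (Fin 3))))
    exact this hA.2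

theorem mem_V (a : ℂ) {A1 A2 A3 : MvPolynomial (Fin 3) ℂ} (h1 : A1 ∈ Cub) (h2 : A2 ∈ Cub)
    (h3 : A3 ∈ Cub) :
    C a * X 0 ^ 3 * X 1 ^ 2 + X 0 ^ 2 * A1 + X 0 * X 2 * A2 + X 2 ^ 2 * A3 ∈ Vspace' :=
  ⟨a, A1, A2, A3, h1.1, h1.2, h2.1, h2.2, h3.1, h3.2, rfl⟩

/-- An invertible linear change of coordinates `T ∈ GL₃(ℂ)` preserves the space `V'` of
equations of quintics with a cusp at `(1:0:0)`, cuspidal tangent `{x1 = 0}`, and an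
ordinary node at `(0:1:0)`, if and only if it has the form
`x0 ↦ a·x0 + b·x2, x1 ↦ c·x1, x2 ↦ d·x2` with `a, c, d` nonzero. -/
theorem stabilizer_of_quintic_space' (T : Matrix (Fin 3) (Fin 3) ℂ) (hT : IsUnit T.det) :
    (∀ F ∈ Vspace', subst T F ∈ Vspace') ↔
      ∃ a b c d : ℂ, a ≠ 0 ∧ c ≠ 0 ∧ d ≠ 0 ∧
        T = !![a, 0, b; 0, c, 0; 0, 0, d] := by
  constructor
  · intro H
    have F1 := vs_props (H _ (mem_V 0 Cub.zero_mem Cub.zero_mem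
      ⟨mon_hom 2 2 2, mon_supp 2 2 2 (by decide) (by decide) (by decide)⟩))
    have F2 := vs_props (H _ (mem_V 1 Cub.zero_mem Cub.zero_mem Cub.zero_mem))
    have F3 := vs_props (H _ (mem_V 0 Cub.zero_mem Cub.zero_mem
      ⟨mon_hom 1 1 1, mon_supp 1 1 1 (by decide) (by decide) (by decide)⟩))
    simp only [eval_subst] at F1 F2 F3
    obtain ⟨r0, r1, -⟩ := F1
    have r0 : T 2 0 = 0 := by simpa using r0
    have r1 : T 2 1 = 0 := by simpa using r1
    have hd := hT.ne_zero
    rw [Matrix.det_fin_three, r0, r1] at hd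
    have r2 : T 2 2 ≠ 0 := by rintro h; simp [h] at hd
    have q0 : T 1 0 = 0 := by
      have := F3.2.2
      simp [r0, r1] at this
      have h : T 1 0 ^ 3 * T 2 2 ^ 2 = 0 := by linear_combination this / 6
      simpa [r2] using h
    have p0 : T 0 0 ≠ 0 := by rintro h; simp [h, q0] at hd
    have q1 : T 1 1 ≠ 0 := by rintro h; simp [h, q0] at hd
    have p1 : T 0 1 = 0 := by
      have := F2.2.1
      simpa [q1] using this
    have q2 : T 1 2 = 0 := by
      have := F2.2.2
      simp [q0] at this
      have h : T 0 0 ^ 3 * T 1 2 ^ 2 = 0 := by linear_combination this / 6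
      simpa [p0] using h
    refine ⟨T 0 0, T 0 2, T 1 1, T 2 2, p0, q1, r2, ?_⟩
    ext i j
    fin_cases i <;> fin_cases j <;> simp [*]
  · rintro ⟨a, b, c, d, -, -, -, rfl⟩ F ⟨e, A1, A2, A3, h1, s1, h2, s2, h3, s3, rfl⟩
    have k1 := Cub_subst a b c d (A := A1) ⟨h1, s1⟩
    have k2 := Cub_subst a b c d (A := A2) ⟨h2, s2⟩
    have k3 := Cub_subst a b c d (A := A3) ⟨h3, s3⟩
    have k0 : (X 1 * X 1 * X 2 : MvPolynomial (Fin 3) ℂ) ∈ Cub :=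
      ⟨mon_hom 1 1 2, mon_supp 1 1 2 (by decide) (by decide) (by decide)⟩
    have key := mem_V (e * a ^ 3 * c ^ 2)
      (Cub.add_mem (Cub_smul (a ^ 2) k1) (Cub_smul (3 * e * a ^ 2 * b * c ^ 2) k0))
      (Cub.add_mem (Cub.add_mem (Cub_smul (2 * a * b) k1) (Cub_smul (a * d) k2))
        (Cub_smul (3 * e * a * b ^ 2 * c ^ 2) k0))
      (Cub.add_mem (Cub.add_mem (Cub_smul (b ^ 2) k1) (Cub_smul (b * d) k2))
        (Cub.add_mem (Cub_smul (d ^ 2) k3) (Cub_smul (e * b ^ 3 * c ^ 2) k0)))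
    convert key using 1
    have hC2 : (C (2 : ℂ) : MvPolynomial (Fin 3) ℂ) = 2 := map_ofNat C 2
    have hC3 : (C (3 : ℂ) : MvPolynomial (Fin 3) ℂ) = 3 := map_ofNat C 3
    change aeval _ _ = _
    generalize g1 : subst _ A1 = B1
    generalize g2 : subst _ A2 = B2
    generalize g3 : subst _ A3 = B3
    unfold subst at g1 g2 g3
    simp only [map_add, map_mul, map_pow, aeval_X, g1, g2, g3, hC2, hC3]
    simp [algebraMap_eq, Fin.sum_univ_three]
    ring
end
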